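/- arXiv:1008.1051 — 3 statements merged into one kernel-verified Lean document; each statement's English description precedes it below -/
import Mathlib

section
/- For every N there exist an integer n ≥ N, a finite set P ⊆ ℝ² of n points, and a finite set W₀ ⊆ ℝ² such that the witness Gabriel graph GG⁻(P,W₀) has at least one edge, and every finite set W ⊆ ℝ² with GG⁻(P,W) having the same edge set as GG⁻(P,W₀) satisfies |W| ≥ (3/2)·n − 8. -/
open scoped RealInnerProductSpace

noncomputable section

/-- The Euclidean plane. -/
abbrev Pt := EuclideanSpace ℝ (Fin 2)

/-- The closed disk with diameter `ab`. -/
def diskD (a b : Pt) : Set Pt := Metric.closedBall (midpoint ℝ a b) (dist a b / 2)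

/-- `a` and `b` are adjacent in the witness Gabriel graph with witness set `W`. -/
def gabrielEdge (W : Set Pt) (a b : Pt) : Prop := (diskD a b \ {a, b}) ∩ W = ∅

/-- General position: no three points collinear, no four points concyclic. -/
def GenPos (S : Set Pt) : Prop :=
  (∀ a ∈ S, ∀ b ∈ S, ∀ c ∈ S, a ≠ b → a ≠ c → b ≠ c → ¬ Collinear ℝ ({a, b, c} : Set Pt)) ∧
  (∀ a ∈ S, ∀ b ∈ S, ∀ c ∈ S, ∀ d ∈ S, a ≠ b → a ≠ c → a ≠ d → b ≠ c → b ≠ d → c ≠ d →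
    ¬ EuclideanGeometry.Cospherical ({a, b, c, d} : Set Pt))

/-- Planar determinant `u₁v₂ − u₂v₁`. -/
def det2 (u v : Pt) : ℝ := u 0 * v 1 - u 1 * v 0

/-- Counterclockwise convex position. -/
def CCWConvexPos {m : ℕ} (q : Fin m → Pt) : Prop :=
  ∀ i j k : Fin m, i < j → j < k → 0 < det2 (q j - q i) (q k - q i)

/-- Cyclic successor in `Fin m`. -/
def cyclicSucc {m : ℕ} (hm : 0 < m) (i : Fin m) : Fin m :=
  ⟨((i : ℕ) + 1) % m, Nat.mod_lt _ hm⟩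

lemma gabrielEdge_iff (W : Set Pt) (a b : Pt) : gabrielEdge W a b ↔
    ∀ w ∈ W, w = a ∨ w = b ∨
      0 < (w 0 - a 0) * (w 0 - b 0) + (w 1 - a 1) * (w 1 - b 1) := by
  have key : ∀ w : Pt, w ∈ diskD a b ↔
      (w 0 - a 0) * (w 0 - b 0) + (w 1 - a 1) * (w 1 - b 1) ≤ 0 := by
    intro w
    have hm : ∀ i, (midpoint ℝ a b) i = (a i + b i) / 2 := by
      intro i
      simp [midpoint_eq_smul_add]
      ring
    unfold diskD
    rw [Metric.mem_closedBall, ← abs_of_nonneg (dist_nonneg (x := w)),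
      ← abs_of_nonneg (by positivity : 0 ≤ dist a b / 2), ← sq_le_sq, div_pow,
      EuclideanSpace.dist_sq_eq, EuclideanSpace.dist_sq_eq]
    simp only [Fin.sum_univ_two, Real.dist_eq, sq_abs, hm]
    constructor <;> intro h <;> nlinarith
  unfold gabrielEdge
  rw [Set.eq_empty_iff_forall_notMem]
  constructor
  · intro h w hw
    have := h w
    simp only [Set.mem_inter_iff, Set.mem_sdiff, key, Set.mem_insert_iff,
      Set.mem_singleton_iff, not_and] at this
    by_cases h1 : w = a
    · exact Or.inl h1
    by_cases h2 : w = b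
    · exact Or.inr (Or.inl h2)
    refine Or.inr (Or.inr ?_)
    by_contra h3
    exact this ⟨not_lt.mp h3, by tauto⟩ hw
  · rintro h w ⟨⟨h1, h2⟩, hw⟩
    rw [key] at h1
    rcases h w hw with h3 | h3 | h3
    · exact h2 (Or.inl h3)
    · exact h2 (Or.inr h3)
    · linarith

/-- height of the point with abscissa `x` -/
def yy (A x : ℝ) : ℝ := x * (2 * A - x) / (16 * A ^ 2)

def FF (A x X Y : ℝ) : ℝ := X * (X - x) + (Y + 8 * A ^ 2) * (Y - yy A x)

def GG (A x X Y : ℝ) : ℝ := (X - x) * (X - (x + 1)) + (Y - yy A x) * (Y - yy A (x + 1))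

lemma yy_mul {A : ℝ} (hA : 1 ≤ A) (x : ℝ) : 8 * A ^ 2 * yy A x = x * (2 * A - x) / 2 := by
  unfold yy; field_simp; ring

lemma yy_nonneg {A x : ℝ} (hA : 1 ≤ A) (h0 : 0 ≤ x) (h1 : x ≤ A) : 0 ≤ yy A x := by
  unfold yy
  apply div_nonneg
  · apply mul_nonneg h0; linarith
  · positivity

lemma yy_le {A x : ℝ} (hA : 1 ≤ A) : yy A x ≤ 1 / 16 := by
  unfold yy
  rw [div_le_iff₀ (by positivity)]
  nlinarith [sq_nonneg (A - x)]

lemma yy_sub {A : ℝ} (hA : 1 ≤ A) (x x' : ℝ) :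
    yy A x' - yy A x = (x' - x) * ((2 * A - x - x') / (16 * A ^ 2)) := by
  unfold yy; field_simp; ring

lemma yy_lt {A x x' : ℝ} (hA : 1 ≤ A) (h : x < x') (h1 : x' ≤ A) : yy A x < yy A x' := by
  have := yy_sub hA x x'
  have h2 : 0 < (x' - x) * ((2 * A - x - x') / (16 * A ^ 2)) := by
    apply mul_pos (by linarith)
    apply div_pos (by linarith) (by positivity)
  linarith

lemma GG_bound {A x X Y : ℝ} (hA : 1 ≤ A) (h0 : 0 ≤ x) (h1 : x + 1 ≤ A) (h : GG A x X Y ≤ 0) :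
    -1 ≤ Y ∧ x - 1 / 4 < X ∧ X < x + 5 / 4 := by
  unfold GG at h
  have a1 := yy_nonneg hA h0 (by linarith)
  have a2 := yy_le (x := x) hA
  have b1 := yy_nonneg hA (by linarith : 0 ≤ x + 1) h1
  have b2 := yy_le (x := x + 1) hA
  generalize yy A x = p at *
  generalize yy A (x + 1) = q at *
  have hx : -(1/4) ≤ (X - x) * (X - (x + 1)) := by nlinarith [sq_nonneg (X - x - 1/2)]
  have hy : -(1/64) ≤ (Y - p) * (Y - q) := by nlinarith [sq_nonneg (Y - p + (Y - q))]
  refine ⟨?_, ?_, ?_⟩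
  · by_contra hc; push Not at hc; nlinarith
  · by_contra hc; push Not at hc; nlinarith
  · by_contra hc; push Not at hc; nlinarith

lemma L_b {A x z X Y : ℝ} (hA : 1 ≤ A) (h0 : 1 ≤ x) (h1 : x + 1 ≤ A) (z0 : 1 ≤ z)
    (z1 : z + 1 ≤ A) (hG : GG A z X Y ≤ 0) (hF : FF A x X Y ≤ 0) : FF A (x + 1) X Y ≤ 0 := by
  obtain ⟨g1, g2, -⟩ := GG_bound hA (by linarith) z1 hG
  have := yy_lt hA (by linarith : x < x + 1) h1
  unfold FF at *
  have hY : 0 ≤ Y + 8 * A ^ 2 := by nlinarith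
  nlinarith [mul_nonneg hY (sub_nonneg.2 this.le)]

lemma L_a {A x z X Y : ℝ} (hA : 1 ≤ A) (h0 : 1 ≤ x) (h1 : x + 1 ≤ z) (z1 : z ≤ A)
    (hF : FF A x X Y ≤ 0) (hF' : FF A z X Y ≤ 0) : FF A (x + 1) X Y ≤ 0 := by
  have e1 := yy_sub hA x (x + 1)
  have e2 := yy_sub hA (x + 1) z
  have n1 := yy_nonneg hA (by linarith : 0 ≤ x) (by linarith)
  unfold FF at *
  set V := Y + 8 * A ^ 2 with hV
  have hYV : Y = V - 8 * A ^ 2 := by rw [hV]; ring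
  set s := (2 * A - x - (x + 1)) / (16 * A ^ 2) with hs
  set s' := (2 * A - (x + 1) - z) / (16 * A ^ 2) with hs'
  have hss : s' ≤ s := by
    rw [hs, hs']; apply div_le_div_of_nonneg_right (by linarith) (by positivity)
  have hs0 : 0 ≤ s := by
    rw [hs]; apply div_nonneg (by linarith) (by positivity)
  have hs1 : s ≤ 1 := by
    rw [hs, div_le_one (by positivity)]; nlinarith
  by_cases hc : 0 ≤ X + s * V
  · have e3 : yy A (x + 1) = yy A x + s := by linarith
    rw [e3]
    linarith
  push Not at hc
  have hV0 : 0 ≤ V := by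
    by_contra hV0
    push Not at hV0
    have q1 : 0 ≤ X * x + V * (8 * A ^ 2 + yy A x) := by
      rw [hYV] at hF; nlinarith [sq_nonneg X, sq_nonneg V]
    have q2 : X < -V := by nlinarith
    have q3 : X * x ≤ -V * x := by nlinarith
    have q4 : x < 8 * A ^ 2 + yy A x := by nlinarith
    nlinarith
  have : X + s' * V < 0 := by nlinarith
  have h5 : (z - (x + 1)) * (X + s' * V) ≤ 0 := by nlinarith
  have e3 : yy A z = yy A (x+1) + (z - (x + 1)) * s' := by linarith
  rw [e3] at hF'
  linarith

lemma L_c {A x z X Y : ℝ} (hA : 1 ≤ A) (h0 : 1 ≤ x) (h1 : x + 2 ≤ A)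
    (hz : x + 1 ≤ z) (hz' : z ≤ x + 2)
    (hG : GG A x X Y ≤ 0) (hG' : GG A (x + 1) X Y ≤ 0) : FF A z X Y ≤ 0 := by
  have e1 := yy_sub hA x (x + 1)
  have e2 := yy_sub hA (x + 1) (x + 1 + 1)
  have m1 := yy_nonneg hA (by linarith : 0 ≤ x + 1) (by linarith)
  have m2 : yy A (x + 1) ≤ yy A z := by
    rcases eq_or_lt_of_le hz with h | h
    · rw [h]
    · exact (yy_lt hA h (by linarith)).le
  have m3 := yy_le (x := z) hA
  unfold GG at *
  unfold FF
  have hA2 : (0:ℝ) < A ^ 2 := by positivity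
  obtain ⟨s, hs⟩ : ∃ s, s = (2 * A - x - (x + 1)) / (16 * A ^ 2) := ⟨_, rfl⟩
  obtain ⟨s', hs'⟩ : ∃ s, s = (2 * A - (x + 1) - (x + 1 + 1)) / (16 * A ^ 2) := ⟨_, rfl⟩
  rw [← hs] at e1
  rw [← hs'] at e2
  have hd : s' < s := by
    rw [hs, hs']; apply div_lt_div_of_pos_right (by linarith) (by positivity)
  have hs'0 : 0 ≤ s' := by
    rw [hs']; apply div_nonneg (by linarith) (by positivity)
  have hs1 : s ≤ 1 := by
    rw [hs, div_le_one (by positivity)]; nlinarith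
  clear hs hs'
  obtain ⟨p, hp⟩ : ∃ p, p = X - (x + 1) := ⟨_, rfl⟩
  obtain ⟨q, hq⟩ : ∃ q, q = Y - yy A (x + 1) := ⟨_, rfl⟩
  have E1 : p ^ 2 + q ^ 2 + p + s * q ≤ 0 := by
    have : yy A x = yy A (x+1) - s := by linarith
    rw [this] at hG; rw [hp, hq]; nlinarith
  have E2 : p ^ 2 + q ^ 2 - p - s' * q ≤ 0 := by
    have : yy A (x + 1 + 1) = yy A (x+1) + s' := by linarith
    rw [this] at hG'; rw [hp, hq]; nlinarith
  have hq0 : q ≤ 0 := by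
    by_contra hc; push Not at hc
    nlinarith [sq_nonneg p, mul_pos (sub_pos.2 hd) hc, sq_nonneg q]
  have hp0 : 0 ≤ p := by nlinarith [sq_nonneg p, sq_nonneg q]
  have hp1 : p ≤ -q := by nlinarith [sq_nonneg p, sq_nonneg q]
  have hpq : p ^ 2 + q ^ 2 ≤ -q := by nlinarith
  have hX : X = p + (x + 1) := by linarith
  have hY : Y = q + yy A (x + 1) := by linarith
  obtain ⟨d, hd'⟩ : ∃ d, d = z - (x + 1) := ⟨_, rfl⟩
  obtain ⟨e, he⟩ : ∃ e, e = yy A z - yy A (x + 1) := ⟨_, rfl⟩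
  have hzz : z = d + (x + 1) := by linarith
  have hyz : yy A z = e + yy A (x + 1) := by linarith
  rw [hyz] at m3 m2 ⊢
  rw [hX, hY, hzz]
  have d0 : 0 ≤ d := by linarith
  have e0 : 0 ≤ e := by linarith
  have e1' : e ≤ 1 := by linarith
  generalize yy A (x + 1) = b at *
  have t1 : p * (x + 1) ≤ -q * A := by
    have h6 : p * (x+1) ≤ p * A := mul_le_mul_of_nonneg_left (by linarith) hp0
    have h7 : p * A ≤ -q * A := mul_le_mul_of_nonneg_right hp1 (by linarith)
    linarith
  have t2 : 0 ≤ p * d := mul_nonneg hp0 d0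
  have t3 : -q * e ≤ -q * 1 := mul_le_mul_of_nonneg_left e1' (by linarith)
  have t4 : 0 ≤ (x + 1) * d := mul_nonneg (by linarith) d0
  have t5 : 0 ≤ e * (b + 8 * A ^ 2) := mul_nonneg e0 (by linarith)
  have t6 : 0 ≤ -q * (8 * A ^ 2 - A - 2) := mul_nonneg (by linarith) (by nlinarith only [hA])
  have t7 : 0 ≤ -q * b := mul_nonneg (by linarith) m1
  linarith

lemma L_d {A x : ℝ} (hA : 1 ≤ A) (h0 : 0 ≤ x) (h1 : x + 1 ≤ A) :
    0 < FF A x (x + 1) (yy A (x + 1)) := by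
  have a1 := yy_lt hA (by linarith : x < x + 1) h1
  have a2 := yy_nonneg hA (by linarith : 0 ≤ x + 1) h1
  unfold FF
  have : 0 ≤ (yy A (x + 1) + 8 * A ^ 2) * (yy A (x + 1) - yy A x) :=
    mul_nonneg (by positivity) (by linarith)
  nlinarith

def cY (A z : ℝ) : ℝ := (yy A z + yy A (z + 1)) / 2 + 1 / 2

lemma c_G {A z : ℝ} : GG A z (z + 1 / 2) (cY A z) ≤ 0 := by
  unfold GG cY
  nlinarith [sq_nonneg (yy A z - yy A (z + 1))]

lemma c_F {A x z : ℝ} (hA : 1 ≤ A) (h1 : x ≤ A) (z0 : 0 ≤ z) (z1 : z + 1 ≤ A) :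
    0 < FF A x (z + 1 / 2) (cY A z) := by
  have a1 := yy_nonneg hA (by linarith : 0 ≤ z) (by linarith)
  have a2 := yy_nonneg hA (by linarith : 0 ≤ z + 1) z1
  have a3 := yy_le (x := x) hA
  have h : (1:ℝ) / 4 ≤ cY A z - yy A x := by unfold cY; linarith
  have h' : (0:ℝ) ≤ cY A z := by unfold cY; linarith
  unfold FF
  generalize cY A z = c at *
  have : 8 * A ^ 2 * (1 / 4) ≤ (c + 8 * A ^ 2) * (c - yy A x) := by
    apply mul_le_mul _ h (by norm_num) (by positivity); linarith
  nlinarith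

def tR (A x : ℝ) : ℝ := (64 * A ^ 4 + x ^ 2 / 2) / ((x - A) ^ 2 + 64 * A ^ 4)

lemma tR_pos {A x : ℝ} (hA : 1 ≤ A) : 0 < tR A x := by unfold tR; positivity

lemma t_F {A x z : ℝ} (hA : 1 ≤ A) :
    FF A z (tR A x * (x - A)) (tR A x * (8 * A ^ 2) - 8 * A ^ 2) = tR A x * ((x - z) ^ 2 / 2) := by
  have h1 : tR A x * ((x - A) ^ 2 + 64 * A ^ 4) = 64 * A ^ 4 + x ^ 2 / 2 := by
    unfold tR; field_simp
  have h2 := yy_mul hA z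
  unfold FF
  generalize tR A x = r at *
  linear_combination r * h1 - r * h2

def uP (A : ℝ) : Pt := !₂[0, -(8 * A ^ 2)]
def pP (A : ℝ) (i : ℕ) : Pt := !₂[(i : ℝ) + 1, yy A ((i : ℝ) + 1)]
def cP (A : ℝ) (i : ℕ) : Pt := !₂[(i : ℝ) + 1 + 1 / 2, cY A ((i : ℝ) + 1)]
def tP (A : ℝ) (i : ℕ) : Pt :=
  !₂[tR A ((i : ℝ) + 1) * ((i : ℝ) + 1 - A), tR A ((i : ℝ) + 1) * (8 * A ^ 2) - 8 * A ^ 2]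

lemma edge_u (W : Set Pt) (A : ℝ) (i : ℕ) : gabrielEdge W (uP A) (pP A i) ↔
    ∀ w ∈ W, w = uP A ∨ w = pP A i ∨ 0 < FF A ((i : ℝ) + 1) (w 0) (w 1) := by
  rw [gabrielEdge_iff]
  simp [uP, pP, FF]

lemma edge_c (W : Set Pt) (A : ℝ) (i : ℕ) : gabrielEdge W (pP A i) (pP A (i + 1)) ↔
    ∀ w ∈ W, w = pP A i ∨ w = pP A (i + 1) ∨ 0 < GG A ((i : ℝ) + 1) (w 0) (w 1) := by
  rw [gabrielEdge_iff]
  simp [pP, GG]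

lemma pP_inj (A : ℝ) : Function.Injective (pP A) := by
  intro i j h
  have := congrArg (fun v : Pt => v 0) h
  simpa [pP] using this

lemma pP_ne_uP (A : ℝ) (i : ℕ) : uP A ≠ pP A i := by
  intro h
  have := congrArg (fun v : Pt => v 0) h
  simp [pP, uP] at this
  have h2 : (0:ℝ) ≤ i := Nat.cast_nonneg i
  linarith

/-- For arbitrarily large `n`, there exist witness Gabriel graphs on `n`
vertices, not empty of edges, requiring at least `(3/2)n − 8` witnesses. -/
theorem witnesses_realize_nonempty_graph_lower_bound (N : ℕ) :
    ∃ n : ℕ, N ≤ n ∧ ∃ P : Finset Pt, P.card = n ∧ ∃ W₀ : Finset Pt,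
      (∃ a ∈ P, ∃ b ∈ P, a ≠ b ∧ gabrielEdge (W₀ : Set Pt) a b) ∧
      ∀ W : Finset Pt,
        (∀ a ∈ P, ∀ b ∈ P, a ≠ b →
          (gabrielEdge (W : Set Pt) a b ↔ gabrielEdge (W₀ : Set Pt) a b)) →
        (3 / 2 : ℝ) * (n : ℝ) - 8 ≤ (W.card : ℝ) := by
  obtain ⟨M, hM⟩ : ∃ M : ℕ, M = N + 1 := ⟨_, rfl⟩
  obtain ⟨A, hAdef⟩ : ∃ A : ℝ, A = 2 * (M : ℝ) + 1 := ⟨_, rfl⟩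
  have hM0 : (0:ℝ) ≤ M := Nat.cast_nonneg M
  have hA : 1 ≤ A := by linarith
  have lt2 : ∀ i : ℕ, i < 2 * M → (i : ℝ) + 1 + 1 ≤ A := by
    intro i hi
    have : (i : ℝ) + 1 ≤ 2 * M := by exact_mod_cast hi
    linarith
  have pos1 : ∀ i : ℕ, (1:ℝ) ≤ (i : ℝ) + 1 := by
    intro i; have : (0:ℝ) ≤ i := Nat.cast_nonneg i
    linarith
  let P : Finset Pt := insert (uP A) ((Finset.range (2 * M)).image (pP A))
  let W₀ : Finset Pt := (Finset.range M).image (fun t => tP A (2 * t)) ∪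
    (Finset.range (2 * M - 1)).image (cP A)
  have huP : uP A ∈ P := Finset.mem_insert_self _ _
  have hpP : ∀ i, i < 2 * M → pP A i ∈ P := fun i hi =>
    Finset.mem_insert_of_mem (Finset.mem_image_of_mem _ (Finset.mem_range.2 hi))
  have hcard : P.card = 2 * M + 1 := by
    rw [Finset.card_insert_of_notMem, Finset.card_image_of_injective _ (pP_inj A),
      Finset.card_range]
    intro h
    obtain ⟨i, -, hi⟩ := Finset.mem_image.1 h
    exact pP_ne_uP A i hi.symm
  have hodd : ∀ t, t < M → gabrielEdge (W₀ : Set Pt) (uP A) (pP A (2 * t + 1)) := by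
    intro t ht
    rw [edge_u]
    intro w hw
    refine Or.inr (Or.inr ?_)
    rcases Finset.mem_union.1 (Finset.mem_coe.1 hw) with h | h
    · obtain ⟨s, hs, rfl⟩ := Finset.mem_image.1 h
      have := t_F (x := ((2 * s : ℕ) : ℝ) + 1) (z := ((2 * t + 1 : ℕ) : ℝ) + 1) hA
      simp only [tP, PiLp.toLp_apply, Matrix.cons_val_zero, Matrix.cons_val_one] at this ⊢
      rw [this]
      apply mul_pos (tR_pos hA)
      have hne : (((2 * s : ℕ) : ℝ) + 1 - (((2 * t + 1 : ℕ) : ℝ) + 1)) ≠ 0 := by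
        intro h0
        have : ((2 * s : ℕ) : ℝ) = ((2 * t + 1 : ℕ) : ℝ) := by linarith
        have : 2 * s = 2 * t + 1 := by exact_mod_cast this
        omega
      positivity
    · obtain ⟨s, hs, rfl⟩ := Finset.mem_image.1 h
      have hs' := Finset.mem_range.1 hs
      have := c_F (x := ((2 * t + 1 : ℕ) : ℝ) + 1) (z := (s : ℝ) + 1) hA
        (by linarith [lt2 (2 * t + 1) (by omega)]) (by linarith [pos1 s]) (lt2 s (by omega))
      simpa only [cP, PiLp.toLp_apply, Matrix.cons_val_zero, Matrix.cons_val_one] using this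
  have heven : ∀ t, t < M → ¬ gabrielEdge (W₀ : Set Pt) (uP A) (pP A (2 * t)) := by
    intro t ht h
    rw [edge_u] at h
    have hmem : tP A (2 * t) ∈ (W₀ : Set Pt) := Finset.mem_coe.2 (Finset.mem_union_left _
      (Finset.mem_image.2 ⟨t, Finset.mem_range.2 ht, rfl⟩))
    have hneg : tR A (((2 * t : ℕ) : ℝ) + 1) * (((2 * t : ℕ) : ℝ) + 1 - A) < 0 :=
      mul_neg_of_pos_of_neg (tR_pos hA) (by linarith [lt2 (2 * t) (by omega)])
    rcases h _ hmem with h | h | h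
    · have := congrArg (fun v : Pt => v 0) h
      simp only [tP, uP, PiLp.toLp_apply, Matrix.cons_val_zero] at this
      linarith
    · have := congrArg (fun v : Pt => v 0) h
      simp only [tP, pP, PiLp.toLp_apply, Matrix.cons_val_zero] at this
      linarith [pos1 (2 * t)]
    · have := t_F (x := ((2 * t : ℕ) : ℝ) + 1) (z := ((2 * t : ℕ) : ℝ) + 1) hA
      simp only [tP, PiLp.toLp_apply, Matrix.cons_val_zero, Matrix.cons_val_one] at h
      rw [this] at h
      simp at h
  have hchain : ∀ k, k < 2 * M - 1 →
      ¬ gabrielEdge (W₀ : Set Pt) (pP A k) (pP A (k + 1)) := by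
    intro k hk h
    rw [edge_c] at h
    have hmem : cP A k ∈ (W₀ : Set Pt) := Finset.mem_coe.2 (Finset.mem_union_right _
      (Finset.mem_image.2 ⟨k, Finset.mem_range.2 hk, rfl⟩))
    rcases h _ hmem with h | h | h
    · have := congrArg (fun v : Pt => v 0) h
      simp only [cP, pP, PiLp.toLp_apply, Matrix.cons_val_zero] at this
      linarith
    · have := congrArg (fun v : Pt => v 0) h
      simp only [cP, pP, PiLp.toLp_apply, Matrix.cons_val_zero] at this
      push_cast at this
      linarith
    · have := c_G (A := A) (z := (k : ℝ) + 1)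
      simp only [cP, PiLp.toLp_apply, Matrix.cons_val_zero, Matrix.cons_val_one] at h
      linarith
  refine ⟨2 * M + 1, by omega, P, hcard, W₀, ⟨uP A, huP, pP A (2 * 0 + 1),
    hpP _ (by omega), pP_ne_uP A _, hodd 0 (by omega)⟩, ?_⟩
  intro W hW
  have Hodd : ∀ t, t < M → ∀ w ∈ W, w = uP A ∨ w = pP A (2 * t + 1) ∨
      0 < FF A (((2 * t + 1 : ℕ) : ℝ) + 1) (w 0) (w 1) := by
    intro t ht
    have := (hW _ huP _ (hpP (2 * t + 1) (by omega)) (pP_ne_uP A _)).2 (hodd t ht)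
    rw [edge_u] at this
    exact fun w hw => this w (Finset.mem_coe.2 hw)
  have Heven : ∀ t : Fin M, ∃ w ∈ W, w ≠ uP A ∧ w ≠ pP A (2 * t) ∧
      FF A (((2 * t : ℕ) : ℝ) + 1) (w 0) (w 1) ≤ 0 := by
    intro t
    have := fun h => heven t t.2
      ((hW _ huP _ (hpP (2 * t) (by omega)) (pP_ne_uP A _)).1 h)
    rw [edge_u] at this
    change ¬ _ at this
    push Not at this
    simpa using this
  have Hchain : ∀ k : Fin (2 * M - 1), ∃ w ∈ W, w ≠ pP A k ∧ w ≠ pP A (k + 1) ∧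
      GG A ((k : ℝ) + 1) (w 0) (w 1) ≤ 0 := by
    intro k
    have := fun h => hchain k k.2
      ((hW _ (hpP k (by omega)) _ (hpP (k + 1) (by omega))
        (fun h => by have := pP_inj A h; omega)).1 h)
    rw [edge_c] at this
    change ¬ _ at this
    push Not at this
    simpa using this
  choose f hfW hf1 hf2 hf3 using Heven
  choose g hgW hg1 hg2 hg3 using Hchain
  -- a point hit by an even star disk is not the next odd vertex
  have hne : ∀ t : Fin M, f t ≠ pP A (2 * t + 1) := by
    intro t h
    have h1 := hf3 t
    have h2 := L_d (A := A) (x := ((2 * t : ℕ) : ℝ) + 1) hA (by linarith [pos1 (2 * t)])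
      (lt2 _ (by omega))
    rw [h] at h1
    simp only [pP, PiLp.toLp_apply, Matrix.cons_val_zero, Matrix.cons_val_one] at h1
    push_cast at h1 h2
    linarith
  have hfodd : ∀ t : Fin M, 0 < FF A (((2 * t : ℕ) : ℝ) + 1 + 1) (f t 0) (f t 1) := by
    intro t
    rcases Hodd t t.2 (f t) (hfW t) with h | h | h
    · exact absurd h (hf1 t)
    · exact absurd h (hne t)
    · push_cast at h ⊢; exact h
  have hff : ∀ s t : Fin M, s < t → f s ≠ f t := by
    intro s t hst h
    have h3 := hf3 t
    rw [← h] at h3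
    have : ((2 * s : ℕ) : ℝ) + 1 ≤ ((2 * t : ℕ) : ℝ) := by
      have : (s : ℕ) < t := hst
      exact_mod_cast (by omega : 2 * (s : ℕ) + 1 ≤ 2 * t)
    have := L_a hA (pos1 _) (by linarith) (by linarith [lt2 (2 * t) (by omega)]) (hf3 s) h3
    linarith [hfodd s]
  have hfg : ∀ (s : Fin M) (k : Fin (2 * M - 1)), f s ≠ g k := by
    intro s k h
    have h3 := hg3 k
    rw [← h] at h3
    have := L_b hA (pos1 _) (lt2 (2 * s) (by omega)) (pos1 k) (lt2 k (by omega)) h3 (hf3 s)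
    linarith [hfodd s]
  have hgg : ∀ k l : Fin (2 * M - 1), k < l → g k ≠ g l := by
    intro k l hkl h
    have h3 := hg3 l
    rw [← h] at h3
    have hkl' : (k : ℕ) < l := hkl
    by_cases hc : (l : ℕ) = k + 1
    · have hlr : (l : ℝ) = (k : ℝ) + 1 := by exact_mod_cast hc
      rw [hlr] at h3
      have hb : (k : ℝ) + 1 + 2 ≤ A := by
        have := lt2 l (by omega); rw [hlr] at this; linarith
      have n2 := hg2 l
      rw [← h, hc] at n2
      have hu : g k ≠ uP A := by
        intro hu
        have := (GG_bound hA (by linarith [pos1 k]) (lt2 k (by omega)) (hg3 k)).2.1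
        rw [hu] at this
        simp only [uP, PiLp.toLp_apply, Matrix.cons_val_zero] at this
        linarith [pos1 k]
      rcases Nat.even_or_odd' (k : ℕ) with ⟨t, ht | ht⟩
      · rcases Hodd t (by omega) (g k) (hgW k) with h' | h' | h'
        · exact hu h'
        · rw [← ht] at h'; exact hg2 k h'
        · have := L_c (z := ((2 * t + 1 : ℕ) : ℝ) + 1) hA (pos1 _) hb
            (by rw [← ht]; push_cast; linarith) (by rw [← ht]; push_cast; linarith) (hg3 k) h3
          linarith
      · rcases Hodd (t + 1) (by omega) (g k) (hgW k) with h' | h' | h'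
        · exact hu h'
        · apply n2; rw [h']; congr 1; omega
        · have e : 2 * (t + 1) + 1 = (k : ℕ) + 2 := by omega
          rw [e] at h'
          have := L_c (z := (((k : ℕ) + 2 : ℕ) : ℝ) + 1) hA (pos1 _) hb
            (by push_cast; linarith) (by push_cast; linarith) (hg3 k) h3
          linarith
    · have h4 : (k : ℝ) + 2 ≤ l := by exact_mod_cast (by omega : (k : ℕ) + 2 ≤ l)
      have b1 := (GG_bound hA (by linarith [pos1 k]) (lt2 k (by omega)) (hg3 k)).2.2
      have b2 := (GG_bound hA (by linarith [pos1 l]) (lt2 l (by omega)) h3).2.1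
      linarith
  have hinj : Function.Injective
      (Sum.elim (fun t => (⟨f t, hfW t⟩ : W)) (fun k => (⟨g k, hgW k⟩ : W))) := by
    rintro (s | s) (t | t) h <;> simp only [Sum.elim_inl, Sum.elim_inr, Subtype.mk.injEq] at h
    · rcases lt_trichotomy s t with h' | h' | h'
      · exact absurd h (hff _ _ h')
      · rw [h']
      · exact absurd h.symm (hff _ _ h')
    · exact absurd h (hfg _ _)
    · exact absurd h.symm (hfg _ _)
    · rcases lt_trichotomy s t with h' | h' | h'
      · exact absurd h (hgg _ _ h')
      · rw [h']
      · exact absurd h.symm (hgg _ _ h')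
  have hc := Fintype.card_le_of_injective _ hinj
  simp only [Fintype.card_sum, Fintype.card_fin, Fintype.card_coe] at hc
  have hc' : 3 * M ≤ W.card + 1 := by omega
  have hc'' : 3 * (M : ℝ) ≤ (W.card : ℝ) + 1 := by exact_mod_cast hc'
  push_cast
  linarith
end
end

section
/- Every finite tree can be drawn as a witness Gabriel graph: for every finite connected acyclic simple graph T on a vertex set V, there exist an injective map φ : V → ℝ² and a finite set W ⊆ ℝ² such that for all distinct u, v ∈ V, u and v are adjacent in T if and only if (D(φ(u),φ(v)) \ {φ(u),φ(v)}) ∩ W = ∅. -/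
open scoped RealInnerProductSpace

noncomputable section

open Filter Topology

def ff (a b c : ℝ × ℝ) : ℝ := (a.1 - c.1) * (b.1 - c.1) + (a.2 - c.2) * (b.2 - c.2)

lemma ff_comm (a b c) : ff a b c = ff b a c := by unfold ff; ring
lemma ff_swap (a c) : ff a a c = ff c c a := by unfold ff; ring

structure Drawn {V : Type} (A : V → V → Prop) (S : Finset V) (φ : V → ℝ × ℝ)
    (W : Finset (ℝ × ℝ)) : Prop where
  pos : ∀ u ∈ S, ∀ v ∈ S, (u = v ∨ A u v) → ∀ w ∈ W, 0 < ff (φ u) (φ v) w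
  neg : ∀ u ∈ S, ∀ v ∈ S, u ≠ v → ¬ A u v → ∃ w ∈ W, ff (φ u) (φ v) w < 0
  vert : ∀ u ∈ S, ∀ v ∈ S, (u = v ∨ A u v) → ∀ z ∈ S, z ≠ u → z ≠ v →
    0 < ff (φ u) (φ v) (φ z)

lemma drawn_insert {V : Type} [DecidableEq V] {A : V → V → Prop} (hs : ∀ u v, A u v → A v u)
    {S : Finset V} {φ : V → ℝ × ℝ} {W : Finset (ℝ × ℝ)} (h : Drawn A S φ W)
    {a : V} (ha : a ∉ S) (pa pw : ℝ × ℝ)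
    (h1 : ∀ w ∈ W, 0 < ff pa pa w) (h1' : ∀ u ∈ S, A a u → ∀ w ∈ W, 0 < ff pa (φ u) w)
    (h2 : ∀ u ∈ S, ∀ v ∈ S, (u = v ∨ A u v) → 0 < ff (φ u) (φ v) pw)
    (h2' : 0 < ff pa pa pw) (h2'' : ∀ u ∈ S, A a u → 0 < ff pa (φ u) pw)
    (h3 : ∀ u ∈ S, ¬ A a u → ff pa (φ u) pw < 0 ∨ ∃ w ∈ W, ff pa (φ u) w < 0)
    (h4 : ∀ u ∈ S, ∀ v ∈ S, (u = v ∨ A u v) → 0 < ff (φ u) (φ v) pa)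
    (h4' : ∀ u ∈ S, A a u → ∀ z ∈ S, z ≠ u → 0 < ff pa (φ u) (φ z)) :
    ∃ φ' W', Drawn A (insert a S) φ' W' := by
  classical
  refine ⟨Function.update φ a pa, insert pw W, ?_, ?_, ?_⟩
  · have key : ∀ u ∈ S, A a u → ∀ w ∈ insert pw W, 0 < ff pa (φ u) w := by
      intro u hu hau w hw
      rcases Finset.mem_insert.1 hw with rfl | hw
      · exact h2'' u hu hau
      · exact h1' u hu hau w hw
    intro u hu v hv huv w hw
    rcases Finset.mem_insert.1 hu with rfl | hu'
    · rcases Finset.mem_insert.1 hv with rfl | hv'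
      · simp only [Function.update_self]
        rcases Finset.mem_insert.1 hw with rfl | hw
        · exact h2'
        · exact h1 w hw
      · have hne : v ≠ u := fun h => ha (h ▸ hv')
        rw [Function.update_self, Function.update_of_ne hne]
        exact key v hv' (huv.resolve_left hne.symm) w hw
    · have hne : u ≠ a := fun h => ha (h ▸ hu')
      rcases Finset.mem_insert.1 hv with rfl | hv'
      · rw [Function.update_self, Function.update_of_ne hne, ff_comm]
        exact key u hu' (hs _ _ (huv.resolve_left hne)) w hw
      · have hne' : v ≠ a := fun h => ha (h ▸ hv')
        rw [Function.update_of_ne hne', Function.update_of_ne hne]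
        rcases Finset.mem_insert.1 hw with rfl | hw
        · exact h2 u hu' v hv' huv
        · exact h.pos u hu' v hv' huv w hw
  · have key : ∀ u ∈ S, ¬ A a u → ∃ w ∈ insert pw W, ff pa (φ u) w < 0 := by
      intro u hu hau
      rcases h3 u hu hau with h | ⟨w, hw, h⟩
      · exact ⟨pw, by simp, h⟩
      · exact ⟨w, by simp [hw], h⟩
    intro u hu v hv huv hA
    rcases Finset.mem_insert.1 hu with rfl | hu'
    · rcases Finset.mem_insert.1 hv with rfl | hv'
      · exact absurd rfl huv
      · rw [Function.update_self, Function.update_of_ne huv.symm]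
        exact key v hv' hA
    · have hne : u ≠ a := fun h => ha (h ▸ hu')
      rcases Finset.mem_insert.1 hv with rfl | hv'
      · rw [Function.update_self, Function.update_of_ne hne]
        obtain ⟨w, hw, h⟩ := key u hu' (fun h => hA (hs _ _ h))
        exact ⟨w, hw, by rwa [ff_comm]⟩
      · have hne' : v ≠ a := fun h => ha (h ▸ hv')
        rw [Function.update_of_ne hne', Function.update_of_ne hne]
        obtain ⟨w, hw, h⟩ := h.neg u hu' v hv' huv hA
        exact ⟨w, by simp [hw], h⟩
  · intro u hu v hv huv z hz hzu hzv
    rcases Finset.mem_insert.1 hu with rfl | hu'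
    · have hz' := (Finset.mem_insert.1 hz).resolve_left hzu
      rcases Finset.mem_insert.1 hv with rfl | hv'
      · rw [Function.update_self, Function.update_of_ne hzu, ff_swap]
        exact h4 z hz' z hz' (Or.inl rfl)
      · have hne : v ≠ u := fun h => ha (h ▸ hv')
        rw [Function.update_self, Function.update_of_ne hne, Function.update_of_ne hzu]
        exact h4' v hv' (huv.resolve_left hne.symm) z hz' hzv
    · have hne : u ≠ a := fun h => ha (h ▸ hu')
      rcases Finset.mem_insert.1 hv with rfl | hv'
      · have hz' := (Finset.mem_insert.1 hz).resolve_left hzv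
        rw [Function.update_self, Function.update_of_ne hne, Function.update_of_ne hzv, ff_comm]
        exact h4' u hu' (hs _ _ (huv.resolve_left hne)) z hz' hzu
      · have hne' : v ≠ a := fun h => ha (h ▸ hv')
        rw [Function.update_of_ne hne', Function.update_of_ne hne]
        rcases Finset.mem_insert.1 hz with rfl | hz'
        · rw [Function.update_self]
          exact h4 u hu' v hv' huv
        · have hne'' : z ≠ a := fun h => ha (h ▸ hz')
          rw [Function.update_of_ne hne'']
          exact h.vert u hu' v hv' huv z hz' hzu hzv

lemma ev_pos (F : ℝ → ℝ) (hF : Continuous F) (h : 0 < F 0) : ∀ᶠ t in 𝓝[>] (0:ℝ), 0 < F t :=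
  ((hF.tendsto 0).mono_left nhdsWithin_le_nhds).eventually_const_lt h

lemma ev_neg (F : ℝ → ℝ) (hF : Continuous F) (h : F 0 < 0) : ∀ᶠ t in 𝓝[>] (0:ℝ), F t < 0 :=
  ((hF.tendsto 0).mono_left nhdsWithin_le_nhds).eventually_lt_const h

lemma ff_cont {a b c : ℝ → ℝ × ℝ} (ha : Continuous a) (hb : Continuous b) (hc : Continuous c) :
    Continuous fun t => ff (a t) (b t) (c t) := by
  unfold ff; fun_prop

lemma drawn_step {V : Type} [DecidableEq V] {A : V → V → Prop} (hs : ∀ u v, A u v → A v u)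
    {S : Finset V} {φ : V → ℝ × ℝ} {W : Finset (ℝ × ℝ)} (h : Drawn A S φ W)
    {a : V} (ha : a ∉ S) {q x y y' : V} (hq : q ∈ S) (hx : x ∈ S)
    (hqx : ∀ u ∈ S, A q u ↔ u = x)
    (hyy : (y = q ∧ y' = x) ∨ (y = x ∧ y' = q)) (hay : ∀ u ∈ S, A a u ↔ u = y)
    (pa pw : ℝ → ℝ × ℝ) (hpa : Continuous pa) (hpw : Continuous pw)
    (pa0 : pa 0 = φ q) (pw0 : pw 0 = φ q)
    (e1 : ∀ᶠ t in 𝓝[>] (0:ℝ), 0 < ff (pa t) (pa t) (pw t))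
    (e2 : ∀ᶠ t in 𝓝[>] (0:ℝ), 0 < ff (φ q) (φ q) (pw t))
    (e3 : ∀ᶠ t in 𝓝[>] (0:ℝ), 0 < ff (φ q) (φ x) (pw t))
    (e4 : ∀ᶠ t in 𝓝[>] (0:ℝ), 0 < ff (φ q) (φ q) (pa t))
    (e5 : ∀ᶠ t in 𝓝[>] (0:ℝ), 0 < ff (φ q) (φ x) (pa t))
    (e6 : ∀ᶠ t in 𝓝[>] (0:ℝ), 0 < ff (pa t) (φ y) (pw t))
    (e7 : ∀ᶠ t in 𝓝[>] (0:ℝ), ff (pa t) (φ y') (pw t) < 0)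
    (e8 : y ≠ q → ∀ᶠ t in 𝓝[>] (0:ℝ), 0 < ff (pa t) (φ y) (φ q)) :
    ∃ φ' W', Drawn A (insert a S) φ' W' := by
  classical
  have hAqx : A q x := (hqx x hx).2 rfl
  have hy : y ∈ S := by rcases hyy with ⟨rfl, _⟩ | ⟨rfl, _⟩ <;> assumption
  have hqy : q = y ∨ A q y := by
    rcases hyy with ⟨rfl, _⟩ | ⟨rfl, _⟩
    · exact Or.inl rfl
    · exact Or.inr hAqx
  have far : ∀ (P : ℝ → ℝ × ℝ), Continuous P → P 0 = φ q →
      (∀ᶠ t in 𝓝[>] (0:ℝ), 0 < ff (φ q) (φ q) (P t)) →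
      (∀ᶠ t in 𝓝[>] (0:ℝ), 0 < ff (φ q) (φ x) (P t)) →
      ∀ᶠ t in 𝓝[>] (0:ℝ), ∀ u ∈ S, ∀ v ∈ S, (u = v ∨ A u v) → 0 < ff (φ u) (φ v) (P t) := by
    intro P hP P0 f1 f2
    rw [Finset.eventually_all]; intro u hu
    rw [Finset.eventually_all]; intro v hv
    by_cases huv : u = v ∨ A u v
    swap
    · exact Eventually.of_forall fun t h => absurd h huv
    suffices ∀ᶠ t in 𝓝[>] (0:ℝ), 0 < ff (φ u) (φ v) (P t) from this.mono fun t h _ => h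
    by_cases hu' : u = q
    · subst hu'
      rcases huv with rfl | huv
      · exact f1
      · rw [(hqx v hv).1 huv]; exact f2
    by_cases hv' : v = q
    · subst hv'
      rw [(hqx u hu).1 (hs _ _ (huv.resolve_left hu'))]
      exact f2.mono fun t h => by rwa [ff_comm]
    refine ev_pos _ (ff_cont continuous_const continuous_const hP) ?_
    rw [P0]
    exact h.vert u hu v hv huv q hq (Ne.symm hu') (Ne.symm hv')
  have g1 : ∀ᶠ t in 𝓝[>] (0:ℝ), ∀ w ∈ W, 0 < ff (pa t) (pa t) w := by
    rw [Finset.eventually_all]; intro w hw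
    refine ev_pos _ (ff_cont hpa hpa continuous_const) ?_
    rw [pa0]; exact h.pos q hq q hq (Or.inl rfl) w hw
  have g1' : ∀ᶠ t in 𝓝[>] (0:ℝ), ∀ w ∈ W, 0 < ff (pa t) (φ y) w := by
    rw [Finset.eventually_all]; intro w hw
    refine ev_pos _ (ff_cont hpa continuous_const continuous_const) ?_
    rw [pa0]; exact h.pos q hq y hy hqy w hw
  have g3 : ∀ᶠ t in 𝓝[>] (0:ℝ), ∀ u ∈ S, ¬ A a u →
      ff (pa t) (φ u) (pw t) < 0 ∨ ∃ w ∈ W, ff (pa t) (φ u) w < 0 := by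
    rw [Finset.eventually_all]; intro u hu
    by_cases hau : A a u
    · exact Eventually.of_forall fun t h => absurd hau h
    have huy : u ≠ y := fun h => hau ((hay u hu).2 h)
    by_cases huy' : u = y'
    · subst huy'
      exact e7.mono fun t h _ => Or.inl h
    have huq : q ≠ u := by rcases hyy with ⟨rfl, rfl⟩ | ⟨rfl, rfl⟩ <;> simp_all [eq_comm]
    have hux : u ≠ x := by rcases hyy with ⟨rfl, rfl⟩ | ⟨rfl, rfl⟩ <;> assumption
    obtain ⟨w, hw, hlt⟩ := h.neg q hq u hu huq (fun h => hux ((hqx u hu).1 h))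
    have := ev_neg (fun t => ff (pa t) (φ u) w)
      (ff_cont hpa continuous_const continuous_const) (by simpa [pa0] using hlt)
    exact this.mono fun t h _ => Or.inr ⟨w, hw, h⟩
  have g4 : ∀ᶠ t in 𝓝[>] (0:ℝ), ∀ z ∈ S, z ≠ y → 0 < ff (pa t) (φ y) (φ z) := by
    rw [Finset.eventually_all]; intro z hz
    by_cases hzy : z = y
    · exact Eventually.of_forall fun t h => absurd hzy h
    suffices ∀ᶠ t in 𝓝[>] (0:ℝ), 0 < ff (pa t) (φ y) (φ z) from this.mono fun t h _ => h
    by_cases hzq : z = q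
    · subst hzq; exact e8 (Ne.symm hzy)
    refine ev_pos _ (ff_cont hpa continuous_const continuous_const) ?_
    rw [pa0]; exact h.vert q hq y hy hqy z hz hzq hzy
  obtain ⟨t, k1, k1', k2, k2', k2'', k3, k4, k4'⟩ := (g1.and <| g1'.and <|
    (far pw hpw pw0 e2 e3).and <| e1.and <| e6.and <| g3.and <|
    (far pa hpa pa0 e4 e5).and g4).exists
  refine drawn_insert hs h ha (pa t) (pw t) k1 ?_ k2 k2' ?_ k3 k4 ?_
  · intro u hu hau; rw [(hay u hu).1 hau]; exact k1'
  · intro u hu hau; rw [(hay u hu).1 hau]; exact k2''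
  · intro u hu hau; rw [(hay u hu).1 hau]; exact k4'

lemma ev_poly (F G : ℝ → ℝ) (c : ℝ) (n : ℕ) (hc : 0 < c) (hG : Continuous G) (h0 : 0 < G 0)
    (hF : ∀ t, F t = t ^ n * c * G t) : ∀ᶠ t in 𝓝[>] (0:ℝ), 0 < F t := by
  filter_upwards [ev_pos G hG h0, self_mem_nhdsWithin] with t h1 h2
  have : (0:ℝ) < t := h2
  rw [hF]; positivity

lemma ev_poly' (F G : ℝ → ℝ) (c : ℝ) (n : ℕ) (hc : 0 < c) (hG : Continuous G) (h0 : 0 < G 0)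
    (hF : ∀ t, F t = - (t ^ n * c * G t)) : ∀ᶠ t in 𝓝[>] (0:ℝ), F t < 0 := by
  filter_upwards [ev_pos G hG h0, self_mem_nhdsWithin] with t h1 h2
  have : (0:ℝ) < t := h2
  have : 0 < t ^ n * c * G t := by positivity
  rw [hF]; linarith

/-- point `q + α e + β Je`, `e = x - q` -/
def pp (q x : ℝ × ℝ) (α β : ℝ) : ℝ × ℝ :=
  (q.1 + α * (x.1 - q.1) - β * (x.2 - q.2), q.2 + α * (x.2 - q.2) + β * (x.1 - q.1))

lemma pp_cont (q x : ℝ × ℝ) {α β : ℝ → ℝ} (ha : Continuous α) (hb : Continuous β) :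
    Continuous fun t => pp q x (α t) (β t) := by
  unfold pp; fun_prop

lemma ff_pp (q x : ℝ × ℝ) (a b c d e f : ℝ) : ff (pp q x a b) (pp q x c d) (pp q x e f) =
    ((a - e) * (c - e) + (b - f) * (d - f)) * ff x x q := by
  unfold ff pp; ring

lemma pp_q (q x : ℝ × ℝ) : q = pp q x 0 0 := by simp [pp]
lemma pp_x (q x : ℝ × ℝ) : x = pp q x 1 0 := by simp [pp]

lemma drawn_pendant {V : Type} [DecidableEq V] {A : V → V → Prop} (hs : ∀ u v, A u v → A v u)
    {S : Finset V} {φ : V → ℝ × ℝ} {W : Finset (ℝ × ℝ)} (h : Drawn A S φ W)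
    {a : V} (ha : a ∉ S) {q x : V} (hq : q ∈ S) (hx : x ∈ S) (hne : q ≠ x)
    (hqx : ∀ u ∈ S, A q u ↔ u = x) (hay : ∀ u ∈ S, A a u ↔ u = q) :
    ∃ φ' W', Drawn A (insert a S) φ' W' := by
  have hc : 0 < ff (φ x) (φ x) (φ q) := h.vert x hx x hx (Or.inl rfl) q hq hne hne
  generalize hQ : φ q = Q at *
  generalize hX : φ x = X at *
  have hf : ∀ a b c d e f, ff (pp Q X a b) (pp Q X c d) (pp Q X e f) =
    ((a - e) * (c - e) + (b - f) * (d - f)) * ff X X Q := ff_pp Q X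
  have hQQ : Q = pp Q X 0 0 := pp_q Q X
  have hXX : X = pp Q X 1 0 := pp_x Q X
  generalize ff X X Q = c at *
  refine drawn_step hs h ha hq hx hqx (Or.inl ⟨rfl, rfl⟩) hay
    (fun t => pp Q X (-t) 0) (fun t => pp Q X (-t/2) t)
    (pp_cont _ _ (by fun_prop) (by fun_prop)) (pp_cont _ _ (by fun_prop) (by fun_prop))
    (by simp [hQ, ← hQQ]) (by simp [hQ, ← hQQ]) ?_ ?_ ?_ ?_ ?_ ?_ ?_ (fun h => absurd rfl h)
  all_goals try simp only [hQ, hX]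
  all_goals generalize pp Q X = P at *
  all_goals subst hQQ
  all_goals subst hXX
  all_goals simp only [hf]
  · exact ev_poly _ (fun t => 5/4) c 2 hc (by fun_prop) (by norm_num) (fun t => by ring)
  · exact ev_poly _ (fun t => 5/4) c 2 hc (by fun_prop) (by norm_num) (fun t => by ring)
  · exact ev_poly _ (fun t => 1/2 + 5/4*t) c 1 hc (by fun_prop) (by norm_num) (fun t => by ring)
  · exact ev_poly _ (fun t => 1) c 2 hc (by fun_prop) (by norm_num) (fun t => by ring)
  · exact ev_poly _ (fun t => 1+t) c 1 hc (by fun_prop) (by norm_num) (fun t => by ring)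
  · exact ev_poly _ (fun t => 3/4) c 2 hc (by fun_prop) (by norm_num) (fun t => by ring)
  · exact ev_poly' _ (fun t => 1/2 - 3/4*t) c 1 hc (by fun_prop) (by norm_num) (fun t => by ring)

lemma drawn_twin {V : Type} [DecidableEq V] {A : V → V → Prop} (hs : ∀ u v, A u v → A v u)
    {S : Finset V} {φ : V → ℝ × ℝ} {W : Finset (ℝ × ℝ)} (h : Drawn A S φ W)
    {a : V} (ha : a ∉ S) {q x : V} (hq : q ∈ S) (hx : x ∈ S) (hne : q ≠ x)
    (hqx : ∀ u ∈ S, A q u ↔ u = x) (hay : ∀ u ∈ S, A a u ↔ u = x) :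
    ∃ φ' W', Drawn A (insert a S) φ' W' := by
  have hc : 0 < ff (φ x) (φ x) (φ q) := h.vert x hx x hx (Or.inl rfl) q hq hne hne
  generalize hQ : φ q = Q at *
  generalize hX : φ x = X at *
  have hf : ∀ a b c d e f, ff (pp Q X a b) (pp Q X c d) (pp Q X e f) =
    ((a - e) * (c - e) + (b - f) * (d - f)) * ff X X Q := ff_pp Q X
  have hQQ : Q = pp Q X 0 0 := pp_q Q X
  have hXX : X = pp Q X 1 0 := pp_x Q X
  generalize ff X X Q = c at *
  refine drawn_step hs h ha hq hx hqx (Or.inr ⟨rfl, rfl⟩) hay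
    (fun t => pp Q X (t^2/2) t) (fun t => pp Q X (-t/4) (t/2))
    (pp_cont _ _ (by fun_prop) (by fun_prop)) (pp_cont _ _ (by fun_prop) (by fun_prop))
    (by simp [hQ, ← hQQ]) (by simp [hQ, ← hQQ]) ?_ ?_ ?_ ?_ ?_ ?_ ?_ (fun _ => ?_)
  all_goals try simp only [hQ, hX]
  all_goals generalize pp Q X = P at *
  all_goals subst hQQ
  all_goals subst hXX
  all_goals simp only [hf]
  · exact ev_poly _ (fun t => (t/2+1/4)^2 + 1/4) c 2 hc (by fun_prop) (by norm_num) (fun t => by ring)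
  · exact ev_poly _ (fun t => 5/16) c 2 hc (by fun_prop) (by norm_num) (fun t => by ring)
  · exact ev_poly _ (fun t => 1/4 + 5/16*t) c 1 hc (by fun_prop) (by norm_num) (fun t => by ring)
  · exact ev_poly _ (fun t => 1+t^2/4) c 2 hc (by fun_prop) (by norm_num) (fun t => by ring)
  · exact ev_poly _ (fun t => 1/2+t^2/4) c 2 hc (by fun_prop) (by norm_num) (fun t => by ring)
  · exact ev_poly _ (fun t => (1/4+t/2)*(1+t/4) - t/4) c 1 hc (by fun_prop) (by norm_num) (fun t => by ring)
  · exact ev_poly' _ (fun t => 3/16 - t/8) c 2 hc (by fun_prop) (by norm_num) (fun t => by ring)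
  · exact ev_poly _ (fun t => 1/2) c 2 hc (by fun_prop) (by norm_num) (fun t => by ring)

lemma drawn_all {V : Type} [DecidableEq V] (A : V → V → Prop) (r : V) (par : V → V) (d : V → ℕ)
    (hA : ∀ u v, A u v ↔ (u ≠ r ∧ par u = v) ∨ (v ≠ r ∧ par v = u))
    (hd : ∀ u, u ≠ r → d u = d (par u) + 1) (n : ℕ) :
    ∀ S : Finset V, S.card = n → r ∈ S → (∀ u ∈ S, u ≠ r → par u ∈ S) →
      ∃ φ W, Drawn A S φ W := by
  have hs : ∀ u v, A u v → A v u := fun u v h => by rw [hA] at h ⊢; exact h.symm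
  induction n with
  | zero => intro S hS hr; simp_all
  | succ n ih =>
    intro S hS hr hpar
    by_cases hE : (S.erase r).Nonempty
    swap
    · have hall : ∀ u ∈ S, u = r := by
        intro u hu; by_contra hne
        exact hE ⟨u, Finset.mem_erase.2 ⟨hne, hu⟩⟩
      refine ⟨fun _ => 0, ∅, by simp, ?_, ?_⟩
      · intro u hu v hv huv; exact absurd ((hall u hu).trans (hall v hv).symm) huv
      · intro u hu v hv _ z hz hzu; exact absurd ((hall z hz).trans (hall u hu).symm) hzu
    obtain ⟨l, hl, hmax⟩ := Finset.exists_max_image (S.erase r) d hE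
    obtain ⟨hlr, hlS⟩ := Finset.mem_erase.1 hl
    have hmax' : ∀ u ∈ S, u ≠ r → d u ≤ d l := fun u hu h => hmax u (Finset.mem_erase.2 ⟨h, hu⟩)
    have hleaf : ∀ m, d m = d l → ∀ u ∈ S, u ≠ r → par u ≠ m := by
      intro m hm u hu hur h
      have h1 := hd u hur
      have h2 := hmax' u hu hur
      rw [h] at h1; omega
    set S' := S.erase l with hS'
    have hSS : insert l S' = S := Finset.insert_erase hlS
    have hlS' : l ∉ S' := by simp [hS']
    have hsub : ∀ u ∈ S', u ∈ S := fun u hu => Finset.mem_of_mem_erase hu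
    have hr' : r ∈ S' := Finset.mem_erase.2 ⟨hlr.symm, hr⟩
    have hpar' : ∀ u ∈ S', u ≠ r → par u ∈ S' := fun u hu hur =>
      Finset.mem_erase.2 ⟨hleaf l rfl u (hsub u hu) hur, hpar u (hsub u hu) hur⟩
    have hp : par l ∈ S' := Finset.mem_erase.2 ⟨hleaf l rfl l hlS hlr, hpar l hlS hlr⟩
    have hal : ∀ u ∈ S', A l u ↔ u = par l := by
      intro u hu
      rw [hA]
      constructor
      · rintro (h | h)
        · exact h.2.symm
        · exact absurd h.2 (hleaf l rfl u (hsub u hu) h.1)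
      · rintro rfl; exact Or.inl ⟨hlr, rfl⟩
    obtain ⟨φ, W, hD⟩ := ih S' (by rw [hS', Finset.card_erase_of_mem hlS, hS]; rfl) hr' hpar'
    rw [← hSS]
    by_cases htw : ∃ m ∈ S', m ≠ r ∧ par m = par l
    · obtain ⟨m, hm, hmr, hml⟩ := htw
      have hdm : d m = d l := by rw [hd m hmr, hd l hlr, hml]
      refine drawn_twin hs hD hlS' hm hp ?_ ?_ hal
      · intro h; have := hd m hmr; rw [hml, ← h] at this; omega
      · intro u hu
        rw [hA]
        constructor
        · rintro (h | h)
          · rw [← h.2, hml]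
          · exact absurd h.2 (hleaf m hdm u (hsub u hu) h.1)
        · rintro rfl; exact Or.inl ⟨hmr, hml⟩
    push Not at htw
    by_cases hpr : par l = r
    · have hall : ∀ u ∈ S', u = r := by
        by_contra! hcon
        obtain ⟨u0, hu0, hu0r⟩ := hcon
        obtain ⟨u, hu, hmin⟩ := Finset.exists_min_image (S'.erase r) d
          ⟨u0, Finset.mem_erase.2 ⟨hu0r, hu0⟩⟩
        obtain ⟨hur, huS⟩ := Finset.mem_erase.1 hu
        have h1 := htw u huS hur
        rw [hpr] at h1
        have h2 := hmin (par u) (Finset.mem_erase.2 ⟨h1, hpar' u huS hur⟩)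
        have := hd u hur
        omega
      have hAl : A l r := (hal r hr').2 hpr.symm
      have hall' : ∀ u ∈ insert l S', u = l ∨ u = r := by
        intro u hu
        rcases Finset.mem_insert.1 hu with h | h
        · exact Or.inl h
        · exact Or.inr (hall u h)
      refine ⟨fun v => if v = l then (0, 0) else (1, 0), ∅, by simp, ?_, ?_⟩
      · intro u hu v hv huv hn
        exfalso
        rcases hall' u hu with rfl | rfl <;> rcases hall' v hv with rfl | rfl
        · exact huv rfl
        · exact hn hAl
        · exact hn (hs _ _ hAl)
        · exact huv rfl
      · intro u hu v hv huv z hz hzu hzv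
        rcases hall' u hu with rfl | rfl <;> rcases hall' v hv with rfl | rfl <;>
          rcases hall' z hz with rfl | rfl <;>
          first | exact absurd rfl hzu | exact absurd rfl hzv | simp [ff, hlr.symm]
    · refine drawn_pendant hs hD hlS' hp (hpar' _ hp hpr) ?_ ?_ hal
      · intro h; have := hd _ hpr; rw [← h] at this; omega
      · intro u hu
        rw [hA]
        constructor
        · rintro (h | h)
          · exact h.2.symm
          · exact absurd h.2 (htw u hu h.1)
        · rintro rfl; exact Or.inl ⟨hpr, rfl⟩

def toPt (p : ℝ × ℝ) : Pt := !₂[p.1, p.2]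

lemma toPt_inj : Function.Injective toPt := by
  intro a b h
  have h0 : toPt a 0 = toPt b 0 := by rw [h]
  have h1 : toPt a 1 = toPt b 1 := by rw [h]
  simp [toPt] at h0 h1
  exact Prod.ext h0 h1

lemma sq_dist2 (a b : Pt) : dist a b ^ 2 = (a 0 - b 0) ^ 2 + (a 1 - b 1) ^ 2 := by
  rw [EuclideanSpace.dist_eq, Real.sq_sqrt (by positivity)]
  simp [Fin.sum_univ_two, Real.dist_eq, sq_abs]

lemma mem_diskD (a b c : ℝ × ℝ) : toPt c ∈ diskD (toPt a) (toPt b) ↔ ff a b c ≤ 0 := by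
  unfold diskD
  rw [Metric.mem_closedBall, ← sq_le_sq₀ dist_nonneg (by positivity), div_pow, sq_dist2, sq_dist2,
    midpoint_eq_smul_add]
  simp [toPt, ff]
  constructor <;> intro h <;> nlinarith

lemma tree_struct {V : Type} (T : SimpleGraph V) (hconn : T.Connected) (hacyc : T.IsAcyclic)
    (r : V) : ∃ par : V → V,
    (∀ u v, T.Adj u v ↔ (u ≠ r ∧ par u = v) ∨ (v ≠ r ∧ par v = u)) ∧
    (∀ u, u ≠ r → T.dist r u = T.dist r (par u) + 1) := by
  choose Q hQ hQl using fun u => (hconn r u).exists_path_of_dist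
  have hnil : ∀ u, u ≠ r → ¬ (Q u).Nil := fun u hu => SimpleGraph.Walk.not_nil_of_ne hu.symm
  have hadj : ∀ u, u ≠ r → T.Adj (Q u).penultimate u :=
    fun u hu => (Q u).adj_penultimate (hnil u hu)
  have key : ∀ u v, T.Adj u v → u ∈ (Q v).support → v ≠ r ∧ (Q v).penultimate = u := by
    intro u v h hu
    refine ⟨?_, (hacyc.eq_penultimate_of_adj_end (hQ v) h.symm hu).symm⟩
    rintro rfl
    have h0 : (Q v).length = 0 := by rw [hQl]; simp
    have := SimpleGraph.Walk.length_eq_zero_iff.1 h0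
    rw [SimpleGraph.Walk.nil_iff_support_eq.1 this] at hu
    exact h.ne (by simpa using hu)
  refine ⟨fun u => (Q u).penultimate, fun u v => ⟨fun h => ?_, ?_⟩, fun u hu => ?_⟩
  · by_cases hu : u ∈ (Q v).support
    · exact Or.inr (key u v h hu)
    · exact Or.inl (key v u h.symm
        (hacyc.mem_support_of_ne_mem_support_of_adj_of_isPath (hQ u) (hQ v) h hu))
  · rintro (⟨h, rfl⟩ | ⟨h, rfl⟩)
    · exact (hadj u h).symm
    · exact hadj v h
  · have h1 := SimpleGraph.dist_le (Q u).dropLast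
    have h2 := hacyc.dist_eq_dist_add_one_of_adj_of_reachable r (hadj u hu) (hconn _ _)
    have h3 : (Q u).dropLast.length + 1 = (Q u).length :=
      SimpleGraph.Walk.length_dropLast_add_one (hnil u hu)
    rw [hQl] at h3
    dsimp only
    omega

/-- Every finite tree can be drawn as a witness Gabriel graph. -/
theorem tree_witness_gabriel_drawable
    {V : Type} [Fintype V] (T : SimpleGraph V)
    (hconn : T.Connected) (hacyc : T.IsAcyclic) :
    ∃ (φ : V → Pt) (W : Finset Pt), Function.Injective φ ∧
      ∀ u v : V, u ≠ v →
        (T.Adj u v ↔ gabrielEdge (W : Set Pt) (φ u) (φ v)) := by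
  classical
  obtain ⟨r⟩ := hconn.nonempty
  obtain ⟨par, hA, hd⟩ := tree_struct T hconn hacyc r
  obtain ⟨φ, W, h⟩ := drawn_all T.Adj r par (T.dist r) hA hd _ Finset.univ rfl (by simp) (by simp)
  refine ⟨fun v => toPt (φ v), W.image toPt, ?_, ?_⟩
  · intro u v huv
    by_contra hne
    have := h.vert u (by simp) u (by simp) (Or.inl rfl) v (by simp) (Ne.symm hne) (Ne.symm hne)
    rw [toPt_inj huv] at this
    simp [ff] at this
  · intro u v huv
    constructor
    · intro hadj
      unfold gabrielEdge
      rw [Set.eq_empty_iff_forall_notMem]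
      rintro z ⟨⟨hz, _⟩, hzW⟩
      obtain ⟨w, hw, rfl⟩ := Finset.mem_image.1 (Finset.mem_coe.1 hzW)
      have := h.pos u (by simp) v (by simp) (Or.inr hadj) w hw
      rw [mem_diskD] at hz
      linarith
    · intro hg
      by_contra hadj
      obtain ⟨w, hw, hlt⟩ := h.neg u (by simp) v (by simp) huv hadj
      have : toPt w ∈ (diskD (toPt (φ u)) (toPt (φ v)) \ {toPt (φ u), toPt (φ v)}) ∩
          ((W.image toPt : Finset Pt) : Set Pt) := by
        refine ⟨⟨(mem_diskD _ _ _).2 hlt.le, ?_⟩, by simpa using ⟨w.1, w.2, hw, rfl⟩⟩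
        rintro (h | h)
        · rw [toPt_inj h] at hlt; simp [ff] at hlt
        · rw [toPt_inj h] at hlt; simp [ff] at hlt
      unfold gabrielEdge at hg
      rw [hg] at this
      exact this
end
end

section
/- Let (P, W, c) be a witness Gabriel drawing of a complete k-partite graph with P ∪ W in general position. Then there do not exist points b₁ ≠ b₂ in P with c(b₁) = c(b₂), points m₁ ≠ m₂ in P of a common color different from c(b₁), and points g₁ ≠ g₂ in P of a common color different from c(b₁) (the colors of the m's and the g's may coincide, but {m₁,m₂} ∩ {g₁,g₂} = ∅), such that m₁ and m₂ lie strictly on one side of the line through b₁ and b₂ while g₁ and g₂ lie strictly on the other side (i.e., det(b₂ − b₁, mᵢ − b₁) > 0 and det(b₂ − b₁, gᵢ − b₁) < 0 for i = 1, 2). -/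
open scoped RealInnerProductSpace

noncomputable section

/-- dual cone coefficient nonnegativity -/
lemma wgg_cone {u1 u2 v1 v2 x1 x2 : ℝ} (huv : u1*v1+u2*v2 ≤ 0)
    (h1 : 0 ≤ x1*u1+x2*u2) (h2 : 0 ≤ x1*v1+x2*v2) :
    0 ≤ (u1*v2-u2*v1)*(x1*v2-x2*v1) := by
  have : (u1*v2-u2*v1)*(x1*v2-x2*v1) = (x1*u1+x2*u2)*(v1^2+v2^2)
      + (x1*v1+x2*v2)*(-(u1*v1+u2*v2)) := by ring
  rw [this]
  have : 0 ≤ -(u1*v1+u2*v2) := by linarith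
  positivity

lemma wgg_cone' {u1 u2 v1 v2 x1 x2 : ℝ} (huv : u1*v1+u2*v2 ≤ 0)
    (h1 : 0 < x1*u1+x2*u2) (h2 : 0 < x1*v1+x2*v2) :
    0 < (u1*v2-u2*v1)*(x1*v2-x2*v1) := by
  have : (u1*v2-u2*v1)*(x1*v2-x2*v1) = (x1*u1+x2*u2)*(v1^2+v2^2)
      + (x1*v1+x2*v2)*(-(u1*v1+u2*v2)) := by ring
  rw [this]
  have h3 : 0 ≤ -(u1*v1+u2*v2) := by linarith
  have h4 : 0 < v1^2+v2^2 := by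
    rcases eq_or_ne v1 0 with h | h
    · rcases eq_or_ne v2 0 with h' | h'
      · subst h h'; simp at h2
      · positivity
    · positivity
  positivity

/-- main case, coordinates centred at the witness of `g`; the `g`'s are positively oriented -/
lemma wgg_core {o p b1 b2 d1 d2 g1 g2 h1 h2 : ℝ} {D C1 A1 E1 C2 A2 E2 : ℝ}
    (hD : D = (b1-o)*(d2-p)-(b2-p)*(d1-o)) (hD0 : 0 < D)
    (hC1 : 0 < C1) (hA1 : 0 ≤ A1) (hE1 : 0 ≤ E1)
    (hC2 : 0 < C2) (hA2 : 0 ≤ A2) (hE2 : 0 ≤ E2)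
    (e11 : D*g1 = C1*o+A1*b1+E1*d1) (e12 : D*g2 = C1*p+A1*b2+E1*d2)
    (e21 : D*h1 = C2*o+A2*b1+E2*d1) (e22 : D*h2 = C2*p+A2*b2+E2*d2)
    (hw : (b1-o)*(d1-o)+(b2-p)*(d2-p) ≤ 0)
    (hδ : 0 < g1*h2-g2*h1)
    (k1 : 0 < b1*h2-b2*h1) (k2 : 0 < d1*h2-d2*h1)
    (l1 : 0 < g1*b2-g2*b1) (l2 : 0 < g1*d2-g2*d1)
    (m1 : 0 < d1*g1+d2*g2) (m2 : 0 < d1*h1+d2*h2) : False := by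
  have hB : 0 < b1*d1+b2*d2 := by
    have : (g1*h2-g2*h1)*(b1*d1+b2*d2) = (b1*h2-b2*h1)*(d1*g1+d2*g2)
      + (g1*b2-g2*b1)*(d1*h1+d2*h2) := by ring
    have h : 0 < (g1*h2-g2*h1)*(b1*d1+b2*d2) := by rw [this]; positivity
    exact (pos_iff_pos_of_mul_pos h).1 hδ
  rcases lt_or_ge (b1*d2-b2*d1) 0 with hε | hε
  · have q1 : D*(g1*d2-g2*d1) = C1*(o*d2-p*d1)+A1*(b1*d2-b2*d1) := by
      linear_combination d2*e11-d1*e12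
    have q2 : D*(b1*h2-b2*h1) = C2*(b1*p-b2*o)+E2*(b1*d2-b2*d1) := by
      linear_combination b1*e22-b2*e21
    have r1 : 0 < C1*(o*d2-p*d1) := by
      have := mul_pos hD0 l2
      have := mul_nonneg hA1 (neg_nonneg.2 hε.le)
      linarith
    have r2 : 0 < C2*(b1*p-b2*o) := by
      have := mul_pos hD0 k1
      have := mul_nonneg hE2 (neg_nonneg.2 hε.le)
      linarith
    have r1 := (pos_iff_pos_of_mul_pos r1).1 hC1
    have r2 := (pos_iff_pos_of_mul_pos r2).1 hC2
    linarith
  · have q1 : D*(g1*b2-g2*b1) = C1*(o*b2-p*b1)-E1*(b1*d2-b2*d1) := by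
      linear_combination b2*e11-b1*e12
    have q2 : D*(d1*h2-d2*h1) = C2*(d1*p-d2*o)-A2*(b1*d2-b2*d1) := by
      linear_combination d1*e22-d2*e21
    have r1 : 0 < C1*(o*b2-p*b1) := by
      have := mul_pos hD0 l1
      have := mul_nonneg hE1 hε
      linarith
    have r2 : 0 < C2*(d1*p-d2*o) := by
      have := mul_pos hD0 k2
      have := mul_nonneg hA2 hε
      linarith
    have r1 := (pos_iff_pos_of_mul_pos r1).1 hC1
    have r2 := (pos_iff_pos_of_mul_pos r2).1 hC2
    obtain ⟨x, hx⟩ : ∃ x, x = o*b2-p*b1 := ⟨_, rfl⟩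
    obtain ⟨y, hy⟩ : ∃ y, y = d1*p-d2*o := ⟨_, rfl⟩
    obtain ⟨ε, he⟩ : ∃ ε, ε = b1*d2-b2*d1 := ⟨_, rfl⟩
    rw [← hx] at r1
    rw [← hy] at r2
    rw [← he] at hε
    have o1 : ε*o = -(y*b1+x*d1) := by rw [hx, hy, he]; ring
    have o2 : ε*p = -(y*b2+x*d2) := by rw [hx, hy, he]; ring
    have key : ε^2*((b1-o)*(d1-o)+(b2-p)*(d2-p)) =
        (ε+y)*y*(b1^2+b2^2) + x*(ε+x)*(d1^2+d2^2) + ((ε+y)*(ε+x)+x*y)*(b1*d1+b2*d2) := by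
      have z1 : ε*(b1-o) = (ε+y)*b1+x*d1 := by linear_combination -o1
      have z2 : ε*(b2-p) = (ε+y)*b2+x*d2 := by linear_combination -o2
      have z3 : ε*(d1-o) = y*b1+(ε+x)*d1 := by linear_combination -o1
      have z4 : ε*(d2-p) = y*b2+(ε+x)*d2 := by linear_combination -o2
      calc _ = (ε*(b1-o))*(ε*(d1-o)) + (ε*(b2-p))*(ε*(d2-p)) := by ring
        _ = _ := by rw [z1, z2, z3, z4]; ring
    have : 0 < ε^2*((b1-o)*(d1-o)+(b2-p)*(d2-p)) := by rw [key]; positivity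
    have := mul_nonpos_of_nonneg_of_nonpos (sq_nonneg ε) hw
    linarith

/-- degenerate case: the `g`-witness is `b₁` -/
lemma wgg_deg {o p d1 d2 g1 g2 h1 h2 : ℝ} {D C1 E1 C2 E2 : ℝ}
    (hD0 : 0 < D) (ho : o ≠ 0 ∨ p ≠ 0)
    (hC1 : 0 < C1) (hE1 : 0 ≤ E1) (hC2 : 0 < C2) (hE2 : 0 ≤ E2)
    (e11 : D*g1 = C1*o+E1*d1) (e12 : D*g2 = C1*p+E1*d2)
    (e21 : D*h1 = C2*o+E2*d1) (e22 : D*h2 = C2*p+E2*d2)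
    (hw : (0-o)*(d1-o)+(0-p)*(d2-p) ≤ 0) (hg : g1*h1+g2*h2 ≤ 0) : False := by
  have n : 0 < o^2+p^2 := by rcases ho with h | h <;> positivity
  have m : 0 < o*d1+p*d2 := by nlinarith
  have : D^2*(g1*h1+g2*h2) = C1*C2*(o^2+p^2)+(C1*E2+C2*E1)*(o*d1+p*d2)
      + E1*E2*(d1^2+d2^2) := by
    calc _ = (D*g1)*(D*h1)+(D*g2)*(D*h2) := by ring
      _ = _ := by rw [e11, e12, e21, e22]; ring
  have h : 0 < D^2*(g1*h1+g2*h2) := by rw [this]; positivity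
  have := mul_nonpos_of_nonneg_of_nonpos (sq_nonneg D) hg
  linarith

lemma wgg_mem (a b w : Pt) : w ∈ diskD a b ↔
    (a 0 - w 0)*(b 0 - w 0)+(a 1 - w 1)*(b 1 - w 1) ≤ 0 := by
  unfold diskD
  rw [Metric.mem_closedBall, EuclideanSpace.dist_eq, EuclideanSpace.dist_eq]
  simp only [Fin.sum_univ_two, Real.dist_eq, sq_abs]
  rw [le_div_iff₀ (by norm_num), ← Real.sqrt_sq (show (0:ℝ) ≤ 2 by norm_num),
    ← Real.sqrt_mul (by positivity), Real.sqrt_le_sqrt_iff (by positivity)]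
  have : ∀ i, (midpoint ℝ a b) i = (a i + b i)/2 := by
    intro i
    rw [midpoint_eq_smul_add]
    simp
    ring
  rw [this, this]
  constructor <;> intro h <;> nlinarith

lemma wgg_ne {a b : Pt} (h : a ≠ b) : a 0 - b 0 ≠ 0 ∨ a 1 - b 1 ≠ 0 := by
  by_contra hc
  push Not at hc
  apply h
  ext i
  fin_cases i
  · exact sub_eq_zero.1 hc.1
  · exact sub_eq_zero.1 hc.2

lemma wgg_pair {b d g h w v : Pt}
    (hwb : w ≠ b) (hwd : w ≠ d) (hvg : v ≠ g) (hvh : v ≠ h) (hbd : b ≠ d)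
    (hw : w ∈ diskD b d) (hv : v ∈ diskD g h)
    (wg : w ≠ g → w ∉ diskD b g ∧ w ∉ diskD d g)
    (wh : w ≠ h → w ∉ diskD b h ∧ w ∉ diskD d h)
    (vb : v ≠ b → v ∉ diskD b g ∧ v ∉ diskD b h)
    (vd : v ≠ d → v ∉ diskD d g ∧ v ∉ diskD d h)
    (sw : 0 < det2 (d - b) (w - b)) (sg : 0 < det2 (d - b) (g - b))
    (sh : 0 < det2 (d - b) (h - b)) : False := by
  simp only [wgg_mem, not_le] at hw hv wg wh vb vd
  simp only [det2, PiLp.sub_apply] at sw sg sh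
  have cw : ∀ x : Pt, (w ≠ x → 0 < (b 0 - w 0)*(x 0 - w 0)+(b 1 - w 1)*(x 1 - w 1) ∧
      0 < (d 0 - w 0)*(x 0 - w 0)+(d 1 - w 1)*(x 1 - w 1)) →
      0 ≤ (x 0 - w 0)*(d 1 - w 1)-(x 1 - w 1)*(d 0 - w 0) ∧
      0 ≤ (b 0 - w 0)*(x 1 - w 1)-(b 1 - w 1)*(x 0 - w 0) := by
    intro x hx
    by_cases hxw : w = x
    · subst hxw; simp
    obtain ⟨h1, h2⟩ := hx hxw
    have D0 : 0 < (b 0 - w 0)*(d 1 - w 1) - (b 1 - w 1)*(d 0 - w 0) := by linarith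
    have t1 := wgg_cone (x1 := x 0 - w 0) (x2 := x 1 - w 1) hw (by linarith) (by linarith)
    have t2 := wgg_cone (u1 := d 0 - w 0) (u2 := d 1 - w 1) (v1 := b 0 - w 0) (v2 := b 1 - w 1)
      (x1 := x 0 - w 0) (x2 := x 1 - w 1) (by linarith) (by linarith) (by linarith)
    refine ⟨nonneg_of_mul_nonneg_right t1 D0, nonneg_of_mul_nonneg_right ?_ D0⟩
    linarith
  obtain ⟨A1, E1⟩ := cw g wg
  obtain ⟨A2, E2⟩ := cw h wh
  have D0 : 0 < (b 0 - w 0)*(d 1 - w 1) - (b 1 - w 1)*(d 0 - w 0) := by linarith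
  by_cases hb : v = b
  · subst hb
    refine wgg_deg (o := w 0 - v 0) (p := w 1 - v 1) (d1 := d 0 - v 0) (d2 := d 1 - v 1)
      (g1 := g 0 - v 0) (g2 := g 1 - v 1) (h1 := h 0 - v 0) (h2 := h 1 - v 1)
      D0 (wgg_ne hwb) sg E1 sh E2 ?_ ?_ ?_ ?_ ?_ hv
    · ring
    · ring
    · ring
    · ring
    · linarith
  by_cases hd : v = d
  · subst hd
    refine wgg_deg (o := w 0 - v 0) (p := w 1 - v 1) (d1 := b 0 - v 0) (d2 := b 1 - v 1)
      (g1 := g 0 - v 0) (g2 := g 1 - v 1) (h1 := h 0 - v 0) (h2 := h 1 - v 1)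
      D0 (wgg_ne hwd) sg A1 sh A2 ?_ ?_ ?_ ?_ ?_ hv
    · ring
    · ring
    · ring
    · ring
    · linarith
  obtain ⟨bg, bh⟩ := vb hb
  obtain ⟨dg, dh⟩ := vd hd
  have k1 := wgg_cone' hv bg bh
  have k2 := wgg_cone' hv dg dh
  have l1 := wgg_cone' (by linarith) bh bg (u1 := h 0 - v 0) (u2 := h 1 - v 1)
    (v1 := g 0 - v 0) (v2 := g 1 - v 1)
  have l2 := wgg_cone' (by linarith) dh dg (u1 := h 0 - v 0) (u2 := h 1 - v 1)
    (v1 := g 0 - v 0) (v2 := g 1 - v 1)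
  rcases lt_trichotomy ((g 0 - v 0)*(h 1 - v 1)-(g 1 - v 1)*(h 0 - v 0)) 0 with hδ | hδ | hδ
  · have hδ' : 0 < (h 0 - v 0)*(g 1 - v 1)-(h 1 - v 1)*(g 0 - v 0) := by linarith
    have k1' : 0 < ((h 0 - v 0)*(g 1 - v 1)-(h 1 - v 1)*(g 0 - v 0)) *
      ((h 0 - v 0)*(b 1 - v 1)-(h 1 - v 1)*(b 0 - v 0)) := by linarith
    have k2' : 0 < ((h 0 - v 0)*(g 1 - v 1)-(h 1 - v 1)*(g 0 - v 0)) *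
      ((h 0 - v 0)*(d 1 - v 1)-(h 1 - v 1)*(d 0 - v 0)) := by linarith
    refine wgg_core (o := w 0 - v 0) (p := w 1 - v 1) (b1 := b 0 - v 0) (b2 := b 1 - v 1)
      (d1 := d 0 - v 0) (d2 := d 1 - v 1)
      (g1 := h 0 - v 0) (g2 := h 1 - v 1) (h1 := g 0 - v 0) (h2 := g 1 - v 1)
      (by ring) D0 sh A2 E2 sg A1 E1 ?_ ?_ ?_ ?_ ?_ hδ'
      ((pos_iff_pos_of_mul_pos l1).1 hδ') ((pos_iff_pos_of_mul_pos l2).1 hδ')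
      ((pos_iff_pos_of_mul_pos k1').1 hδ') ((pos_iff_pos_of_mul_pos k2').1 hδ') dh dg
    · ring
    · ring
    · ring
    · ring
    · linarith
  · rw [hδ] at k1; simp at k1
  · have l1' : 0 < ((g 0 - v 0)*(h 1 - v 1)-(g 1 - v 1)*(h 0 - v 0)) *
      ((g 0 - v 0)*(b 1 - v 1)-(g 1 - v 1)*(b 0 - v 0)) := by linarith
    have l2' : 0 < ((g 0 - v 0)*(h 1 - v 1)-(g 1 - v 1)*(h 0 - v 0)) *
      ((g 0 - v 0)*(d 1 - v 1)-(g 1 - v 1)*(d 0 - v 0)) := by linarith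
    refine wgg_core (o := w 0 - v 0) (p := w 1 - v 1) (b1 := b 0 - v 0) (b2 := b 1 - v 1)
      (d1 := d 0 - v 0) (d2 := d 1 - v 1)
      (g1 := g 0 - v 0) (g2 := g 1 - v 1) (h1 := h 0 - v 0) (h2 := h 1 - v 1)
      (by ring) D0 sg A1 E1 sh A2 E2 ?_ ?_ ?_ ?_ ?_ hδ
      ((pos_iff_pos_of_mul_pos k1).1 hδ) ((pos_iff_pos_of_mul_pos k2).1 hδ)
      ((pos_iff_pos_of_mul_pos l1').1 hδ) ((pos_iff_pos_of_mul_pos l2').1 hδ) dg dh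
    · ring
    · ring
    · ring
    · ring
    · linarith

lemma wgg_collinear {b d w : Pt} (hbd : b ≠ d) (h : det2 (d - b) (w - b) = 0) :
    Collinear ℝ ({b, d, w} : Set Pt) := by
  rw [collinear_iff_of_mem (p₀ := b) (by simp)]
  refine ⟨d - b, ?_⟩
  simp only [det2, PiLp.sub_apply] at h
  have key : ∃ r : ℝ, w = r • (d - b) +ᵥ b := by
    rcases wgg_ne hbd.symm with h0 | h0
    · refine ⟨(w 0 - b 0)/(d 0 - b 0), ?_⟩
      ext i
      fin_cases i
      · simp; field_simp; ring
      · simp; field_simp; linarith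
    · refine ⟨(w 1 - b 1)/(d 1 - b 1), ?_⟩
      ext i
      fin_cases i
      · simp; field_simp; linarith
      · simp; field_simp; ring
  rintro p (rfl | rfl | rfl)
  · exact ⟨0, by simp⟩
  · exact ⟨1, by simp⟩
  · exact key

/-- In a witness Gabriel drawing of a complete `k`-partite graph, no line
through two same-colored vertices can strictly separate two same-colored vertices (of a
second color) from two same-colored vertices (of a third color). -/
theorem no_separating_line_through_monochromatic_pair
    {k : ℕ} (P W : Finset Pt) (c : Pt → Fin k)
    (hgp : GenPos ((P : Set Pt) ∪ (W : Set Pt)))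
    (hdraw : ∀ a ∈ P, ∀ b ∈ P, a ≠ b →
      (gabrielEdge (W : Set Pt) a b ↔ c a ≠ c b)) :
    ¬ ∃ b₁ ∈ P, ∃ b₂ ∈ P, ∃ m₁ ∈ P, ∃ m₂ ∈ P, ∃ g₁ ∈ P, ∃ g₂ ∈ P,
        b₁ ≠ b₂ ∧ c b₁ = c b₂ ∧
        m₁ ≠ m₂ ∧ c m₁ = c m₂ ∧ c m₁ ≠ c b₁ ∧
        g₁ ≠ g₂ ∧ c g₁ = c g₂ ∧ c g₁ ≠ c b₁ ∧
        m₁ ≠ g₁ ∧ m₁ ≠ g₂ ∧ m₂ ≠ g₁ ∧ m₂ ≠ g₂ ∧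
        0 < det2 (b₂ - b₁) (m₁ - b₁) ∧ 0 < det2 (b₂ - b₁) (m₂ - b₁) ∧
        det2 (b₂ - b₁) (g₁ - b₁) < 0 ∧ det2 (b₂ - b₁) (g₂ - b₁) < 0 := by
  rintro ⟨b, hb, d, hd, m, hm, m', hm', g, hg, g', hg', hbd, cbd, hmm, cmm, cmb, hgg, cgg, cgb,
    -, -, -, -, s1, s2, s3, s4⟩
  have wit : ∀ x ∈ P, ∀ y ∈ P, x ≠ y → c x = c y → ∃ w ∈ W, w ≠ x ∧ w ≠ y ∧ w ∈ diskD x y := by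
    intro x hx y hy hxy hc
    have h1 : ¬ gabrielEdge (W : Set Pt) x y := fun h => (hdraw x hx y hy hxy).1 h hc
    unfold gabrielEdge at h1
    obtain ⟨w, ⟨h2, h3⟩, h4⟩ := Set.nonempty_iff_ne_empty.2 h1
    simp only [Set.mem_insert_iff, Set.mem_singleton_iff, not_or] at h3
    exact ⟨w, h4, h3.1, h3.2, h2⟩
  have non : ∀ x ∈ P, ∀ y ∈ P, c y ≠ c x → ∀ w ∈ W, w ≠ x → w ≠ y → w ∉ diskD x y := by
    intro x hx y hy hc w hw h1 h2 h3
    have hxy : x ≠ y := by rintro rfl; exact hc rfl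
    have h := (hdraw x hx y hy hxy).2 hc.symm
    unfold gabrielEdge at h
    have : w ∈ (∅ : Set Pt) := by
      rw [← h]
      exact ⟨⟨h3, by simp [h1, h2]⟩, hw⟩
    exact this
  have sep : ∀ b ∈ P, ∀ d ∈ P, ∀ g ∈ P, ∀ h ∈ P, b ≠ d → g ≠ h → c b = c d → c g = c h →
      c g ≠ c b → ∀ w ∈ W, w ≠ b → w ≠ d → w ∈ diskD b d → 0 < det2 (d - b) (w - b) →
      0 < det2 (d - b) (g - b) → 0 < det2 (d - b) (h - b) → False := by
    intro b hb d hd g hg h hh hbd hgh cbd cgh cgb w hw wb wd wm sw sg sh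
    obtain ⟨v, hv, vg, vh, vm⟩ := wit g hg h hh hgh cgh
    have e1 : c g ≠ c d := cbd ▸ cgb
    have e2 : c h ≠ c b := cgh ▸ cgb
    have e3 : c h ≠ c d := cgh ▸ e1
    exact wgg_pair wb wd vg vh hbd wm vm
      (fun t => ⟨non b hb g hg cgb w hw wb t, non d hd g hg e1 w hw wd t⟩)
      (fun t => ⟨non b hb h hh e2 w hw wb t, non d hd h hh e3 w hw wd t⟩)
      (fun t => ⟨non b hb g hg cgb v hv t vg, non b hb h hh e2 v hv t vh⟩)
      (fun t => ⟨non d hd g hg e1 v hv t vg, non d hd h hh e3 v hv t vh⟩) sw sg sh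
  have flip : ∀ x : Pt, det2 (b - d) (x - d) = - det2 (d - b) (x - b) := by
    intro x; simp only [det2, PiLp.sub_apply]; ring
  obtain ⟨w, hw, wb, wd, wm⟩ := wit b hb d hd hbd cbd
  rcases lt_trichotomy (det2 (d - b) (w - b)) 0 with h | h | h
  · refine sep d hd b hb g hg g' hg' hbd.symm hgg cbd.symm cgg (cbd ▸ cgb) w hw wd wb ?_ ?_ ?_ ?_
    · rw [wgg_mem] at wm ⊢; linarith
    · rw [flip]; linarith
    · rw [flip]; linarith
    · rw [flip]; linarith
  · exact hgp.1 b (Or.inl hb) d (Or.inl hd) w (Or.inr hw) hbd wb.symm wd.symm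
      (wgg_collinear hbd h)
  · exact sep b hb d hd m hm m' hm' hbd hmm cbd cmm cmb w hw wb wd wm h s1 s2
end
end
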